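/- Let μ be a nonzero Borel measure on (0,∞) and define f : [0,∞) → [0,∞] by f(r) = ∫_{(0,∞)} exp(−παr) dμ(α). Assume that ∑_{γ ∈ Γ₂} f(‖γ − z‖²) < ∞ for every z ∈ ℝ² (in particular all sums below are finite). Then the infimum over z ∈ ℝ² of ∑_{λ ∈ Λ₂} f(‖λ − z‖²) is strictly greater than the infimum over z ∈ ℝ² of ∑_{γ ∈ Γ₂} f(‖γ − z‖²). -/

import Mathlib

open Real MeasureTheory
open scoped RealInnerProductSpace ENNReal

/-- The vector `(x, y)` in the Euclidean plane `ℝ²`. -/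
noncomputable def vec2 (x y : ℝ) : EuclideanSpace ℝ (Fin 2) :=
  (WithLp.equiv 2 (Fin 2 → ℝ)).symm ![x, y]

/-- The hexagonal lattice `Λ₂` of density 1:
`Λ₂ = {√(2/√3)·(k + l/2, l·√3/2) : (k,l) ∈ ℤ²}`. -/
noncomputable def hexLattice : Set (EuclideanSpace ℝ (Fin 2)) :=
  {p | ∃ k l : ℤ,
    p = Real.sqrt (2 / Real.sqrt 3) • vec2 ((k : ℝ) + (l : ℝ) / 2) ((l : ℝ) * (Real.sqrt 3 / 2))}

/-- The deep hole `z₀ = √(2/√3)·(1/2, 1/(2√3))` of the hexagonal lattice. -/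
noncomputable def deepHole : EuclideanSpace ℝ (Fin 2) :=
  Real.sqrt (2 / Real.sqrt 3) • vec2 (1 / 2) (1 / (2 * Real.sqrt 3))

/-- The honeycomb structure `Γ₂ = √2·(Λ₂ ∪ (Λ₂ + z₀))` of density 1. -/
noncomputable def honeycomb : Set (EuclideanSpace ℝ (Fin 2)) :=
  (fun p => Real.sqrt 2 • p) '' (hexLattice ∪ (fun p => p + deepHole) '' hexLattice)

/-!
Bernstein–Widder reduces the claim to one Gaussian `exp (-πα‖·‖²)` at a time. The centre of a
honeycomb cell is a deep hole of both hexagonal lattices that make up the honeycomb, so the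
honeycomb potential there is twice the potential of the hexagonal lattice at its deep hole, with `α`
replaced by `2α`. This has to be smaller than the potential of the hexagonal lattice at an arbitrary
point.

For large `α` the latter is bounded below by the single Gaussian of a lattice point at distance at
most the covering radius, while the former is about six times the square of that Gaussian. For small
`α` Poisson summation bounds the latter below by `(1 - 3Q + O(Q³)) / α` and evaluates the former to
`(1 - 3√Q + O(√Q³)) / α`, where `Q < 1` is the Gaussian weight of a shortest dual vector. The lower
bound obtained in this way is uniform in the position and measurable in `α`, so the strict
inequality survives the integration.
-/

section CosineKernel

open HurwitzZeta

/-- The joint contribution of the frequencies `n` and `-n` to the theta series `cosKernel x t`. -/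
noncomputable def cosTerm (x t : ℝ) (n : ℕ) : ℝ :=
  2 * cos (2 * π * x * n) * exp (-(π * t)) ^ n ^ 2

/-- The odd-frequency part `∑ cos (2πnx) exp (-πn²t)`, over odd integers `n`, of the theta series
`cosKernel x t`; the even frequencies, which are subtracted, sum to `cosKernel (2x) (4t)`. -/
noncomputable def oddCosKernel (x t : ℝ) : ℝ :=
  cosKernel x t - cosKernel ↑(2 * x) (4 * t)

lemma cosTerm_two_mul (x t : ℝ) (n : ℕ) : cosTerm x t (2 * n) = cosTerm (2 * x) (4 * t) n := by
  simp_rw [cosTerm, ← exp_nat_mul]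
  push_cast
  ring_nf

lemma cosTerm_sub_half (x t : ℝ) (n : ℕ) :
    cosTerm (x - 1 / 2) t n = (-1) ^ n * cosTerm x t n := by
  rw [cosTerm, cosTerm, show 2 * π * (x - 1 / 2) * n = 2 * π * x * n - n * π by ring,
    cos_sub_nat_mul_pi]
  ring

lemma abs_cosTerm_le (x t : ℝ) (n : ℕ) : |cosTerm x t n| ≤ 2 * exp (-(π * t)) ^ n ^ 2 := by
  rw [cosTerm, abs_mul, abs_mul, abs_two, abs_of_pos (pow_pos (exp_pos _) _)]
  gcongr
  linarith [abs_cos_le_one (2 * π * x * n)]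

lemma hasSum_cosTerm_succ (x : ℝ) {t : ℝ} (ht : 0 < t) :
    HasSum (fun n ↦ cosTerm x t (n + 1)) (cosKernel x t - 1) := by
  refine (hasSum_nat_cosKernel₀ x ht).congr_fun fun n ↦ ?_
  rw [cosTerm, ← exp_nat_mul]
  push_cast
  ring_nf

lemma hasSum_cosTerm_even (x : ℝ) {t : ℝ} (ht : 0 < t) :
    HasSum (fun n ↦ cosTerm x t (2 * n + 1 + 1)) (cosKernel ↑(2 * x) (4 * t) - 1) :=
  (hasSum_cosTerm_succ (2 * x) (by positivity)).congr_fun fun n ↦ cosTerm_two_mul x t (n + 1)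

lemma hasSum_cosTerm_odd (x : ℝ) {t : ℝ} (ht : 0 < t) :
    HasSum (fun n ↦ cosTerm x t (2 * n + 1)) (oddCosKernel x t) := by
  have all := hasSum_cosTerm_succ x ht
  obtain ⟨s, odd⟩ := all.summable.comp_injective (mul_right_injective₀ (two_ne_zero' ℕ))
  have total : s + (cosKernel ↑(2 * x) (4 * t) - 1) = cosKernel x t - 1 :=
    (HasSum.even_add_odd (f := fun n ↦ cosTerm x t (n + 1)) odd (hasSum_cosTerm_even x ht)).unique
      all
  have odd_sum : s = oddCosKernel x t := by
    unfold oddCosKernel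
    linarith
  exact odd_sum ▸ odd

lemma cosKernel_sub_half (x : ℝ) {t : ℝ} (ht : 0 < t) :
    cosKernel ↑(x - 1 / 2) t = cosKernel ↑(2 * x) (4 * t) - oddCosKernel x t := by
  have odd : HasSum (fun n ↦ cosTerm (x - 1 / 2) t (2 * n + 1)) (-oddCosKernel x t) :=
    (hasSum_cosTerm_odd x ht).neg.congr_fun fun n ↦ by
      rw [cosTerm_sub_half]; simp [pow_succ]
  have even : HasSum (fun n ↦ cosTerm (x - 1 / 2) t (2 * n + 1 + 1))
      (cosKernel ↑(2 * x) (4 * t) - 1) :=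
    (hasSum_cosTerm_even x ht).congr_fun fun n ↦ by
      rw [cosTerm_sub_half]; simp [pow_succ]
  have total := (HasSum.even_add_odd (f := fun n ↦ cosTerm (x - 1 / 2) t (n + 1)) odd even).unique
    (hasSum_cosTerm_succ (x - 1 / 2) ht)
  linarith

lemma abs_sub_sum_cosTerm_le {x t s : ℝ} (ht : 0 < t) {ν : ℕ → ℕ} {k : ℕ}
    (hs : HasSum (fun n ↦ cosTerm x t (ν n)) s) (hk : exp (-(π * t)) ^ k ≤ 1 / 3) (N : ℕ)
    (hν : ∀ n, ν N ^ 2 + k * n ≤ ν (n + N) ^ 2) :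
    |s - ∑ n ∈ Finset.range N, cosTerm x t (ν n)| ≤ 3 * exp (-(π * t)) ^ ν N ^ 2 := by
  set q := exp (-(π * t))
  have q_pos : 0 < q := exp_pos _
  have q_le_one : q ≤ 1 := exp_le_one_iff.2 (by nlinarith [pi_pos])
  have term_le (n : ℕ) : ‖cosTerm x t (ν (n + N))‖ ≤ 2 * q ^ ν N ^ 2 * (1 / 3) ^ n := by
    calc |cosTerm x t (ν (n + N))| ≤ 2 * q ^ ν (n + N) ^ 2 := abs_cosTerm_le ..
      _ ≤ 2 * q ^ (ν N ^ 2 + k * n) := by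
        gcongr 2 * ?_
        exact pow_le_pow_of_le_one q_pos.le q_le_one (hν n)
      _ = 2 * q ^ ν N ^ 2 * (q ^ k) ^ n := by rw [pow_add, pow_mul, mul_assoc]
      _ ≤ 2 * q ^ ν N ^ 2 * (1 / 3) ^ n := by gcongr
  have geometric := (hasSum_geometric_of_lt_one (r := (1 / 3 : ℝ)) (by norm_num)
    (by norm_num)).mul_left (2 * q ^ ν N ^ 2)
  calc |s - ∑ n ∈ Finset.range N, cosTerm x t (ν n)|
      ≤ 2 * q ^ ν N ^ 2 * (1 - 1 / 3)⁻¹ :=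
        ((hasSum_nat_add_iff' N).2 hs).norm_le_of_bounded geometric term_le
    _ = 3 * q ^ ν N ^ 2 := by ring

lemma abs_cosKernel_sub_one_le (x : ℝ) {t : ℝ} (ht : 0 < t) (hq : exp (-(π * t)) ≤ 1 / 3) :
    |cosKernel x t - 1| ≤ 3 * exp (-(π * t)) := by
  simpa using abs_sub_sum_cosTerm_le ht (k := 1) (hasSum_cosTerm_succ x ht) (by simpa using hq) 0
    (fun n ↦ by nlinarith)

lemma abs_cosKernel_sub_one_add_le (x : ℝ) {t : ℝ} (ht : 0 < t) (hq : exp (-(π * t)) ≤ 1 / 3) :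
    |cosKernel x t - (1 + 2 * exp (-(π * t)) * cos (2 * π * x))| ≤ 3 * exp (-(π * t)) ^ 4 := by
  have tail := abs_sub_sum_cosTerm_le ht (k := 1) (hasSum_cosTerm_succ x ht) (by simpa using hq) 1
    (fun n ↦ by nlinarith)
  norm_num [cosTerm] at tail
  convert tail using 2
  ring

lemma abs_oddCosKernel_sub_le (x : ℝ) {t : ℝ} (ht : 0 < t) (hq : exp (-(π * t)) ^ 4 ≤ 1 / 3) :
    |oddCosKernel x t - 2 * exp (-(π * t)) * cos (2 * π * x)| ≤ 3 * exp (-(π * t)) ^ 9 := by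
  have tail := abs_sub_sum_cosTerm_le ht (hasSum_cosTerm_odd x ht) hq 1 (fun n ↦ by nlinarith)
  norm_num [cosTerm] at tail
  convert tail using 2
  ring

end CosineKernel

section EvenKernel

open HurwitzZeta

lemma evenKernel_nonneg (x : ℝ) {t : ℝ} (ht : 0 < t) : 0 ≤ evenKernel x t :=
  (hasSum_int_evenKernel x ht).nonneg fun _ ↦ (exp_pos _).le

lemma ofReal_evenKernel (x : ℝ) {t : ℝ} (ht : 0 < t) :
    ENNReal.ofReal (evenKernel x t) = ∑' k : ℤ, ENNReal.ofReal (exp (-π * (k - x) ^ 2 * t)) := by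
  have series := hasSum_int_evenKernel (-x) ht
  rw [AddCircle.coe_neg, evenKernel_neg] at series
  rw [← series.tsum_eq,
    ENNReal.ofReal_tsum_of_nonneg (fun _ ↦ (exp_pos _).le) series.summable]
  simp_rw [sub_eq_add_neg]

lemma exp_neg_mul_nat_add_sq_le {x t : ℝ} (hx : 0 ≤ x) (ht : 0 ≤ t) (n : ℕ) :
    exp (-π * (n + x) ^ 2 * t) ≤ exp (-(π * t) * x ^ 2) * exp (-(π * t)) ^ n := by
  rw [← exp_nat_mul, ← exp_add, exp_le_exp]
  have sq_le : x ^ 2 + n ≤ (n + x) ^ 2 := by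
    have : (n : ℝ) ≤ n ^ 2 := mod_cast Nat.le_self_pow two_ne_zero n
    nlinarith [mul_nonneg n.cast_nonneg hx]
  nlinarith [mul_le_mul_of_nonneg_left sq_le (mul_nonneg pi_pos.le ht)]

lemma evenKernel_le {x t : ℝ} (hx₀ : 0 ≤ x) (hx₁ : x ≤ 1) (ht : 0 < t) :
    evenKernel x t ≤
      (exp (-(π * t) * x ^ 2) + exp (-(π * t) * (1 - x) ^ 2)) / (1 - exp (-(π * t))) := by
  have geometric := (hasSum_geometric_of_lt_one (exp_pos (-(π * t))).le
    (Real.exp_lt_one_iff.2 (neg_lt_zero.2 (by positivity)))).mul_left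
      (exp (-(π * t) * x ^ 2) + exp (-(π * t) * (1 - x) ^ 2))
  refine hasSum_le (fun n ↦ ?_) (hasSum_int_evenKernel x ht).nat_add_neg_add_one geometric
  have neg_index : ((-(n + 1 : ℤ) : ℤ) + x) ^ 2 = (n + (1 - x)) ^ 2 := by
    push_cast
    ring
  rw [neg_index, add_mul]
  exact add_le_add (exp_neg_mul_nat_add_sq_le hx₀ ht.le n)
    (exp_neg_mul_nat_add_sq_le (sub_nonneg.2 hx₁) ht.le n)

lemma evenKernel_le_of_exp_le {x t : ℝ} (hx₀ : 0 ≤ x) (hx₁ : x ≤ 1) (ht : 0 < t)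
    (hq : exp (-(π * t)) ≤ 1 / 1000) :
    evenKernel x t ≤ 101 / 100 * (exp (-(π * t) * x ^ 2) + exp (-(π * t) * (1 - x) ^ 2)) := by
  refine (evenKernel_le hx₀ hx₁ ht).trans ?_
  rw [div_le_iff₀ (by linarith), mul_right_comm]
  exact le_mul_of_one_le_left (by positivity) (by linarith)

end EvenKernel

/-- The squared minimal distance `2/√3` of the hexagonal lattice of density 1. -/
noncomputable def hexMinSq : ℝ := 2 / √3

lemma hexMinSq_pos : 0 < hexMinSq := by
  unfold hexMinSq
  positivity

lemma three_mul_hexMinSq_sq : 3 * hexMinSq ^ 2 = 4 := by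
  rw [hexMinSq, div_pow, sq_sqrt (by norm_num)]
  norm_num

section HexTheta

open HurwitzZeta

/-- The theta function `∑ exp (-πα‖p - z‖²)`, over `p` in the hexagonal lattice. Here `(x, y)` are
the coordinates of `z` with respect to the rectangular sublattice of index 2, whose basis vectors
are orthogonal with squared lengths `hexMinSq` and `3 * hexMinSq`. -/
noncomputable def hexTheta (α x y : ℝ) : ℝ :=
  evenKernel x (α * hexMinSq) * evenKernel y (3 * (α * hexMinSq)) +
    evenKernel ↑(x - 1 / 2) (α * hexMinSq) * evenKernel ↑(y - 1 / 2) (3 * (α * hexMinSq))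

/-- The nome `exp (-πv)` of the lattice dual to `√α • hexLattice`, where `v = hexMinSq / α` is its
squared minimal distance. -/
noncomputable def hexNome (α : ℝ) : ℝ := exp (-(π * (hexMinSq / α)))

lemma hexNome_pos (α : ℝ) : 0 < hexNome α := exp_pos _

lemma hexNome_two_mul_sq (α : ℝ) : hexNome (2 * α) ^ 2 = hexNome α := by
  rw [hexNome, hexNome, ← exp_nat_mul]
  congr 1
  rw [mul_comm 2 α, ← div_div]
  push_cast
  ring

lemma mul_hexTheta {α t : ℝ} (ht : 0 < t) (hα : 0 < α) (hαt : 4 * (t * α) = hexMinSq) (x y : ℝ) :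
    α * hexTheta α x y =
      cosKernel ↑(2 * x) (4 * (3 * t)) * cosKernel ↑(2 * y) (4 * t) +
        oddCosKernel x (3 * t) * oddCosKernel y t := by
  have one_div_left : 1 / (α * hexMinSq) = 3 * t := by
    have := hexMinSq_pos
    field_simp
    linear_combination (-3 / 4) * hexMinSq * hαt - (1 / 4) * three_mul_hexMinSq_sq
  have one_div_right : 1 / (3 * (α * hexMinSq)) = t := by
    rw [mul_comm, ← div_div, one_div_left]
    ring
  have prefactor : α * (1 / √(α * hexMinSq) * (1 / √(3 * (α * hexMinSq)))) = 1 / 2 := by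
    have : √(α * hexMinSq) * √(3 * (α * hexMinSq)) = 2 * α := by
      rw [← sqrt_mul (by have := hexMinSq_pos; positivity), sqrt_eq_iff_mul_self_eq_of_pos]
      · linear_combination -(α ^ 2) * three_mul_hexMinSq_sq
      · positivity
    rw [one_div_mul_one_div, this]
    field_simp
  simp_rw [hexTheta, evenKernel_functional_equation, ← sqrt_eq_rpow, one_div_left, one_div_right,
    cosKernel_sub_half x (by positivity : 0 < 3 * t), cosKernel_sub_half y ht]
  unfold oddCosKernel
  linear_combination 2 * (cosKernel ↑(2 * x) (4 * (3 * t)) * cosKernel ↑(2 * y) (4 * t) +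
    (cosKernel x (3 * t) - cosKernel ↑(2 * x) (4 * (3 * t))) *
      (cosKernel y t - cosKernel ↑(2 * y) (4 * t))) * prefactor

lemma abs_mul_sub_one_add_le {e₁ e₂ r c : ℝ} (hr₀ : 0 ≤ r) (hr : r ≤ 1 / 3) (hc : |c| ≤ 1)
    (h₁ : |e₁ - 1| ≤ 3 * r ^ 3) (h₂ : |e₂ - (1 + 2 * r * c)| ≤ 3 * r ^ 4) :
    |e₁ * e₂ - (1 + 2 * r * c)| ≤ 7 * r ^ 3 := by
  have r3_le : r ^ 3 ≤ (1 / 3) ^ 3 := by gcongr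
  have r4_le : 3 * r ^ 4 ≤ r ^ 3 := by nlinarith [pow_nonneg hr₀ 3]
  have e₂_le : |e₂| ≤ 2 := by
    rw [abs_le] at hc h₂ ⊢
    constructor <;> nlinarith
  calc |e₁ * e₂ - (1 + 2 * r * c)| = |(e₁ - 1) * e₂ + (e₂ - (1 + 2 * r * c))| := by ring_nf
    _ ≤ |e₁ - 1| * |e₂| + |e₂ - (1 + 2 * r * c)| := by
      rw [← abs_mul]
      exact abs_add_le _ _
    _ ≤ 3 * r ^ 3 * 2 + r ^ 3 := by
      gcongr
      exact h₂.trans r4_le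
    _ = 7 * r ^ 3 := by ring

lemma abs_mul_sub_four_mul_le {o₁ o₂ q c₁ c₂ : ℝ} (hq₀ : 0 ≤ q) (hq : q ^ 4 ≤ 1 / 3)
    (hc₁ : |c₁| ≤ 1) (hc₂ : |c₂| ≤ 1) (h₁ : |o₁ - 2 * q ^ 3 * c₁| ≤ 3 * (q ^ 3) ^ 9)
    (h₂ : |o₂ - 2 * q * c₂| ≤ 3 * q ^ 9) :
    |o₁ * o₂ - 4 * q ^ 4 * c₁ * c₂| ≤ 7 * (q ^ 4) ^ 3 := by
  have q8_le : q ^ 8 ≤ 1 / 9 := by nlinarith [pow_nonneg hq₀ 4]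
  have q16_le : q ^ 16 ≤ 1 / 81 := by nlinarith [pow_nonneg hq₀ 8]
  have o₂_le : |o₂| ≤ 7 / 3 * q := by
    have : 3 * q ^ 9 ≤ q / 3 := by nlinarith
    rw [abs_le] at hc₂ h₂ ⊢
    constructor <;> nlinarith
  calc |o₁ * o₂ - 4 * q ^ 4 * c₁ * c₂|
      = |(o₁ - 2 * q ^ 3 * c₁) * o₂ + 2 * q ^ 3 * c₁ * (o₂ - 2 * q * c₂)| := by ring_nf
    _ ≤ |o₁ - 2 * q ^ 3 * c₁| * |o₂| + 2 * q ^ 3 * |c₁| * |o₂ - 2 * q * c₂| := by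
      rw [← abs_mul, ← abs_of_nonneg (by positivity : 0 ≤ 2 * q ^ 3), ← abs_mul, ← abs_mul,
        abs_of_nonneg (by positivity : 0 ≤ 2 * q ^ 3)]
      exact abs_add_le _ _
    _ ≤ 3 * (q ^ 3) ^ 9 * (7 / 3 * q) + 2 * q ^ 3 * 1 * (3 * q ^ 9) := by gcongr
    _ = (7 * q ^ 16 + 6) * (q ^ 4) ^ 3 := by ring
    _ ≤ 7 * (q ^ 4) ^ 3 := by gcongr; linarith

lemma abs_mul_hexTheta_sub_le {α : ℝ} (hα : 0 < α) (hR : hexNome α ≤ 1 / 3) (x y : ℝ) :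
    |α * hexTheta α x y - (1 + hexNome α *
        (2 * cos (2 * π * (2 * y)) + 4 * cos (2 * π * x) * cos (2 * π * y)))|
      ≤ 14 * hexNome α ^ 3 := by
  set t := hexMinSq / (4 * α) with ht_def
  have ht : 0 < t := div_pos hexMinSq_pos (by positivity)
  have hαt : 4 * (t * α) = hexMinSq := by
    rw [ht_def]
    field_simp
  set q := exp (-(π * t))
  have q_pos : 0 < q := exp_pos _
  have exp_eq (n : ℕ) : exp (-(π * (n * t))) = q ^ n := by
    rw [← exp_nat_mul]
    ring_nf
  have nome_eq : hexNome α = q ^ 4 := by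
    rw [← exp_eq, hexNome, ← hαt]
    push_cast
    field_simp
  have q3 : exp (-(π * (3 * t))) = q ^ 3 := mod_cast exp_eq 3
  have q4 : exp (-(π * (4 * t))) = q ^ 4 := mod_cast exp_eq 4
  have q12 : exp (-(π * (4 * (3 * t)))) = (q ^ 4) ^ 3 := by
    rw [← pow_mul, ← exp_eq]
    push_cast
    ring_nf
  rw [nome_eq] at hR ⊢
  have q12_le : (q ^ 4) ^ 3 ≤ 1 / 3 :=
    (pow_le_of_le_one (by positivity) (by linarith) three_ne_zero).trans hR
  have even := abs_mul_sub_one_add_le (by positivity) hR (abs_cos_le_one (2 * π * (2 * y)))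
    (q12 ▸ abs_cosKernel_sub_one_le (2 * x) (by positivity) (q12 ▸ q12_le))
    (q4 ▸ abs_cosKernel_sub_one_add_le (2 * y) (by positivity) (q4 ▸ hR))
  have odd := abs_mul_sub_four_mul_le q_pos.le hR (abs_cos_le_one (2 * π * x))
    (abs_cos_le_one (2 * π * y))
    (q3 ▸ abs_oddCosKernel_sub_le x (by positivity) (by rwa [q3, pow_right_comm]))
    (abs_oddCosKernel_sub_le y ht hR)
  rw [mul_hexTheta ht hα hαt]
  calc _ = |_ + _| := by congr 1; ring
    _ ≤ _ := abs_add_le _ _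
    _ ≤ 7 * (q ^ 4) ^ 3 + 7 * (q ^ 4) ^ 3 := add_le_add even odd
    _ = 14 * (q ^ 4) ^ 3 := by ring

lemma hexTheta_nonneg {α : ℝ} (hα : 0 < α) (x y : ℝ) : 0 ≤ hexTheta α x y := by
  have hc := hexMinSq_pos
  have nonneg (u v : ℝ) :
      0 ≤ evenKernel u (α * hexMinSq) * evenKernel v (3 * (α * hexMinSq)) :=
    mul_nonneg (evenKernel_nonneg u (by positivity)) (evenKernel_nonneg v (by positivity))
  exact add_nonneg (nonneg x y) (nonneg _ _)

lemma neg_three_le_cos_add_cos_mul_cos (x y : ℝ) :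
    -3 ≤ 2 * cos (2 * y) + 4 * cos x * cos y := by
  rw [cos_two_mul]
  nlinarith [sq_nonneg (2 * cos y + cos x), cos_sq_le_one x]

lemma one_sub_le_mul_hexTheta {α : ℝ} (hα : 0 < α) (hR : hexNome α ≤ 1 / 3) (x y : ℝ) :
    1 - 3 * hexNome α - 14 * hexNome α ^ 3 ≤ α * hexTheta α x y := by
  have fourier := (abs_le.1 (abs_mul_hexTheta_sub_le hα hR x y)).1
  have cos_bound := neg_three_le_cos_add_cos_mul_cos (2 * π * x) (2 * π * y)
  rw [mul_left_comm 2 (2 * π) y] at cos_bound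
  linarith [mul_le_mul_of_nonneg_left cos_bound (hexNome_pos α).le]

lemma mul_hexTheta_half_sixth_le {α : ℝ} (hα : 0 < α) (hR : hexNome α ≤ 1 / 3) :
    α * hexTheta α (1 / 2) (1 / 6) ≤ 1 - 3 * hexNome α + 14 * hexNome α ^ 3 := by
  have fourier := (abs_le.1 (abs_mul_hexTheta_sub_le hα hR (1 / 2) (1 / 6))).2
  rw [show 2 * π * (1 / 2) = π by ring, show 2 * π * (2 * (1 / 6)) = 2 * (π / 3) by ring,
    show 2 * π * (1 / 6) = π / 3 by ring, cos_two_mul, cos_pi, cos_pi_div_three] at fourier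
  linarith

lemma hexTheta_half_sixth (α : ℝ) :
    hexTheta α (1 / 2) (1 / 6) =
      evenKernel ↑(1 / 2 : ℝ) (α * hexMinSq) * evenKernel ↑(1 / 6 : ℝ) (3 * (α * hexMinSq)) +
        evenKernel ↑(0 : ℝ) (α * hexMinSq) * evenKernel ↑(1 / 3 : ℝ) (3 * (α * hexMinSq)) := by
  rw [hexTheta, sub_self, show (1 / 6 - 1 / 2 : ℝ) = -(1 / 3) by norm_num, AddCircle.coe_neg,
    evenKernel_neg]

lemma hexTheta_one_third (α : ℝ) : hexTheta α 1 (1 / 3) = hexTheta α (1 / 2) (1 / 6) := by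
  rw [hexTheta_half_sixth, hexTheta, AddCircle.coe_period, ← AddCircle.coe_zero, sub_half,
    show (1 / 3 - 1 / 2 : ℝ) = -(1 / 6) by norm_num, AddCircle.coe_neg, evenKernel_neg, add_comm]

lemma hexTheta_half_sixth_le {α : ℝ} (hα : 0 < α)
    (hq : exp (-(π * (α * hexMinSq))) ≤ 1 / 1000) :
    hexTheta α (1 / 2) (1 / 6) ≤ 16 / 5 * exp (-(π * (α * hexMinSq) / 3)) := by
  set t := α * hexMinSq
  have ht : 0 < t := mul_pos hα hexMinSq_pos
  set g := exp (-(π * t / 12))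
  have g_pos : 0 < g := exp_pos _
  have exp_eq (n : ℕ) {u : ℝ} (hu : u = n * (-(π * t / 12))) : exp u = g ^ n := by
    rw [hu, exp_nat_mul]
  have g12_le : g ^ 12 ≤ 1 / 1000 := by rwa [exp_eq 12 (by push_cast; ring)] at hq
  have g24_le : g ^ 24 ≤ 1 / 1000 := by nlinarith [pow_pos g_pos 12]
  have q3_le : exp (-(π * (3 * t))) ≤ 1 / 1000 := by
    rw [exp_eq 36 (by push_cast; ring)]
    nlinarith [pow_pos g_pos 12]
  have half := evenKernel_le_of_exp_le (x := 1 / 2) (by norm_num) (by norm_num) ht hq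
  have sixth := evenKernel_le_of_exp_le (x := 1 / 6) (by norm_num) (by norm_num) (by positivity)
    q3_le
  have zero := evenKernel_le_of_exp_le le_rfl zero_le_one ht hq
  have third := evenKernel_le_of_exp_le (x := 1 / 3) (by norm_num) (by norm_num) (by positivity)
    q3_le
  rw [exp_eq 3 (by push_cast; ring), exp_eq 3 (by push_cast; ring)] at half
  rw [exp_eq 1 (by push_cast; ring), exp_eq 25 (by push_cast; ring)] at sixth
  rw [exp_eq 0 (by push_cast; ring), exp_eq 12 (by push_cast; ring)] at zero
  rw [exp_eq 4 (by push_cast; ring), exp_eq 16 (by push_cast; ring)] at third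
  have third_nonneg := evenKernel_nonneg (1 / 3) (t := 3 * t) (by positivity)
  have sixth_nonneg := evenKernel_nonneg (1 / 6) (t := 3 * t) (by positivity)
  rw [exp_eq 4 (by push_cast; ring)]
  calc hexTheta α (1 / 2) (1 / 6)
      = evenKernel ↑(1 / 2 : ℝ) t * evenKernel ↑(1 / 6 : ℝ) (3 * t) +
          evenKernel ↑(0 : ℝ) t * evenKernel ↑(1 / 3 : ℝ) (3 * t) := hexTheta_half_sixth α
    _ ≤ 101 / 100 * (g ^ 3 + g ^ 3) * (101 / 100 * (g ^ 1 + g ^ 25)) +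
          101 / 100 * (g ^ 0 + g ^ 12) * (101 / 100 * (g ^ 4 + g ^ 16)) := by gcongr
    _ = (101 / 100) ^ 2 * (2 * (1 + g ^ 24) + (1 + g ^ 12) ^ 2) * g ^ 4 := by ring
    _ ≤ (101 / 100) ^ 2 * (2 * (1 + 1 / 1000) + (1 + 1 / 1000) ^ 2) * g ^ 4 := by gcongr
    _ ≤ 16 / 5 * g ^ 4 := by gcongr; norm_num

/-- A lower bound for `hexTheta α x y`, uniform in `(x, y)`, that exceeds the honeycomb potential at
`honeycombHole`. Small `α` use the first Fourier coefficients, large `α` the nearest lattice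
point. -/
noncomputable def hexThetaLowerBound (α : ℝ) : ℝ :=
  if α < 8 / 5 then (1 - 3 * hexNome α - 14 * hexNome α ^ 3) / α
  else exp (-(π * (α * hexMinSq) / 3))

lemma measurable_hexThetaLowerBound : Measurable hexThetaLowerBound := by
  unfold hexThetaLowerBound hexNome
  exact Measurable.ite measurableSet_Iio (by fun_prop) (by fun_prop)

lemma lt_pi_mul_hexMinSq : 3.61 < π * hexMinSq := by
  have : 1.15 < hexMinSq := by nlinarith [three_mul_hexMinSq_sq, hexMinSq_pos]
  nlinarith [pi_gt_d2]

lemma hexNome_two_mul_le {α : ℝ} (hα : 0 < α) (hα_lt : α < 8 / 5) : hexNome (2 * α) ≤ 1 / 3 := by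
  have exponent : 1 / 8 + 1 ≤ π * (hexMinSq / (2 * α)) := by
    rw [← mul_div_assoc, le_div_iff₀ (by positivity)]
    linarith [lt_pi_mul_hexMinSq]
  have three_le : 3 ≤ exp (1 / 8 + 1) := by
    rw [exp_add]
    nlinarith [add_one_le_exp (1 / 8 : ℝ), exp_one_gt_d9]
  rw [hexNome, exp_neg, one_div]
  exact inv_anti₀ (by norm_num) (three_le.trans (exp_le_exp.2 exponent))

lemma exp_neg_pi_mul_div_three_le {α : ℝ} (hα : 8 / 5 ≤ α) :
    exp (-(π * (α * hexMinSq) / 3)) ≤ 2 / 13 := by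
  have exponent : -(1 / 10) + 1 + 1 ≤ π * (α * hexMinSq) / 3 := by
    nlinarith [lt_pi_mul_hexMinSq]
  have le_exp : 13 / 2 ≤ exp (-(1 / 10) + 1 + 1) := by
    have sq_lower : 7.3 ≤ exp 1 * exp 1 := by nlinarith [exp_one_gt_d9]
    rw [exp_add, exp_add, mul_assoc]
    nlinarith [add_one_le_exp (-(1 / 10) : ℝ)]
  rw [exp_neg, ← inv_div 13]
  exact inv_anti₀ (by norm_num) (le_exp.trans (exp_le_exp.2 exponent))

lemma two_mul_hexTheta_two_mul_lt {α : ℝ} (hα : 0 < α) :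
    2 * hexTheta (2 * α) (1 / 2) (1 / 6) < hexThetaLowerBound α := by
  unfold hexThetaLowerBound
  split_ifs with hα_lt
  · have hR := hexNome_two_mul_le hα hα_lt
    have upper := mul_hexTheta_half_sixth_le (by positivity) hR
    rw [lt_div_iff₀ hα, ← hexNome_two_mul_sq]
    have R_pos := hexNome_pos (2 * α)
    set R := hexNome (2 * α)
    have R2_le : R ^ 2 ≤ (1 / 3) ^ 2 := by gcongr
    have R5_le : R ^ 5 ≤ (1 / 3) ^ 5 := by gcongr
    have : 0 < R * (3 * (1 - R) - 14 * (R ^ 2 + R ^ 5)) := mul_pos R_pos (by linarith)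
    linarith
  · have d_le := exp_neg_pi_mul_div_three_le (not_lt.1 hα_lt)
    have exp_eq (n : ℕ) {u : ℝ} (hu : u = n * (-(π * (α * hexMinSq) / 3))) :
        exp u = exp (-(π * (α * hexMinSq) / 3)) ^ n := by
      rw [hu, exp_nat_mul]
    have d_pos := exp_pos (-(π * (α * hexMinSq) / 3))
    have upper := hexTheta_half_sixth_le (α := 2 * α) (by positivity) (by
      rw [exp_eq 6 (by push_cast; ring)]
      exact (pow_le_pow_left₀ d_pos.le d_le 6).trans (by norm_num))
    rw [exp_eq 2 (by push_cast; ring)] at upper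
    nlinarith

end HexTheta

section GaussianSum

variable {E : Type*} [SeminormedAddCommGroup E]

/-- The Gaussian potential `∑ exp (-πα‖p - z‖²)` at the point `z`, where `p` ranges over `S`. -/
noncomputable def gaussianSum (S : Set E) (α : ℝ) (z : E) : ℝ≥0∞ :=
  ∑' p : S, ENNReal.ofReal (exp (-(π * α) * ‖(p : E) - z‖ ^ 2))

lemma gaussianSum_range {ι : Type*} {g : ι → E} (hg : Function.Injective g) (α : ℝ) (z : E) :
    gaussianSum (Set.range g) α z = ∑' i, ENNReal.ofReal (exp (-(π * α) * ‖g i - z‖ ^ 2)) :=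
  tsum_range (fun p ↦ ENNReal.ofReal (exp (-(π * α) * ‖p - z‖ ^ 2))) hg

lemma gaussianSum_image_add_right (S : Set E) (v : E) (α : ℝ) (z : E) :
    gaussianSum ((· + v) '' S) α z = gaussianSum S α (z - v) := by
  rw [gaussianSum, tsum_image (fun p ↦ ENNReal.ofReal (exp (-(π * α) * ‖p - z‖ ^ 2)))
    (add_left_injective v).injOn]
  simp_rw [gaussianSum, ← sub_add, sub_add_eq_add_sub]

lemma gaussianSum_image_smul [NormedSpace ℝ E] {c : ℝ} (hc : c ≠ 0) (S : Set E) (α : ℝ) (z : E) :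
    gaussianSum ((c • ·) '' S) α (c • z) = gaussianSum S (c ^ 2 * α) z := by
  rw [gaussianSum, tsum_image (fun p ↦ ENNReal.ofReal (exp (-(π * α) * ‖p - c • z‖ ^ 2)))
    (smul_right_injective E hc).injOn]
  simp_rw [gaussianSum, ← smul_sub, norm_smul, mul_pow, norm_eq_abs, sq_abs]
  ring_nf

lemma gaussianSum_union {S T : Set E} (hST : Disjoint S T) (α : ℝ) (z : E) :
    gaussianSum (S ∪ T) α z = gaussianSum S α z + gaussianSum T α z :=
  ENNReal.summable.tsum_union_disjoint (f := fun p ↦ ENNReal.ofReal (exp (-(π * α) * ‖p - z‖ ^ 2)))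
    hST ENNReal.summable

lemma gaussianSum_union_le (S T : Set E) (α : ℝ) (z : E) :
    gaussianSum (S ∪ T) α z ≤ gaussianSum S α z + gaussianSum T α z :=
  ENNReal.tsum_union_le (fun p ↦ ENNReal.ofReal (exp (-(π * α) * ‖p - z‖ ^ 2))) S T

lemma ofReal_exp_le_gaussianSum {S : Set E} {p z : E} (hp : p ∈ S) {α r : ℝ} (hα : 0 ≤ α)
    (hr : ‖p - z‖ ^ 2 ≤ r) : ENNReal.ofReal (exp (-(π * α) * r)) ≤ gaussianSum S α z := by
  refine le_trans ?_ (ENNReal.le_tsum ⟨p, hp⟩)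
  gcongr ENNReal.ofReal (exp ?_)
  exact mul_le_mul_of_nonpos_left hr (neg_nonpos.2 (by positivity))

end GaussianSum

/-- The point with coordinates `(x, y)` with respect to the orthogonal basis of a rectangular
sublattice of index 2 of `hexLattice`. -/
noncomputable def rectPoint (x y : ℝ) : EuclideanSpace ℝ (Fin 2) := √(2 / √3) • vec2 x (y * √3)

/-- The rectangular sublattice of index 2 of `hexLattice`. -/
noncomputable def rectLattice : Set (EuclideanSpace ℝ (Fin 2)) :=
  Set.range fun n : ℤ × ℤ ↦ rectPoint n.1 n.2

lemma rectPoint_add (x y u v : ℝ) : rectPoint x y + rectPoint u v = rectPoint (x + u) (y + v) := by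
  rw [rectPoint, rectPoint, rectPoint, ← smul_add, add_mul]
  congr 1
  ext i
  fin_cases i <;> simp [vec2]

lemma rectPoint_sub (x y u v : ℝ) : rectPoint x y - rectPoint u v = rectPoint (x - u) (y - v) := by
  rw [sub_eq_iff_eq_add, rectPoint_add, sub_add_cancel, sub_add_cancel]

lemma norm_rectPoint_sq (x y : ℝ) : ‖rectPoint x y‖ ^ 2 = hexMinSq * (x ^ 2 + 3 * y ^ 2) := by
  rw [rectPoint, norm_smul, mul_pow, norm_eq_abs, sq_abs, sq_sqrt (by positivity), hexMinSq,
    EuclideanSpace.real_norm_sq_eq]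
  simp [vec2, mul_pow, mul_comm]

lemma rectPoint_inj {x y u v : ℝ} : rectPoint x y = rectPoint u v ↔ x = u ∧ y = v := by
  rw [← sub_eq_zero, rectPoint_sub, ← norm_eq_zero, ← sq_eq_zero_iff, norm_rectPoint_sq,
    mul_eq_zero_iff_left hexMinSq_pos.ne',
    add_eq_zero_iff_of_nonneg (by positivity) (by positivity)]
  simp [sub_eq_zero]

lemma exists_rectPoint_eq (z : EuclideanSpace ℝ (Fin 2)) : ∃ x y, rectPoint x y = z := by
  refine ⟨z 0 / √(2 / √3), z 1 / (√(2 / √3) * √3), ?_⟩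
  ext i
  fin_cases i <;> simp [rectPoint, vec2] <;> field_simp

lemma mem_hexLattice {p : EuclideanSpace ℝ (Fin 2)} :
    p ∈ hexLattice ↔ ∃ k l : ℤ, p = rectPoint (k + l / 2) (l / 2) := by
  simp only [rectPoint, div_mul_eq_mul_div, mul_div_assoc]
  rfl

lemma hexLattice_eq_union :
    hexLattice = rectLattice ∪ (· + rectPoint (1 / 2) (1 / 2)) '' rectLattice := by
  ext p
  rw [mem_hexLattice, rectLattice, ← Set.range_comp]
  constructor
  · rintro ⟨k, l, rfl⟩
    obtain ⟨m, rfl | rfl⟩ := Int.even_or_odd' l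
    · exact .inl ⟨(k + m, m), by simp⟩
    · refine .inr ⟨(k + m, m), ?_⟩
      rw [Function.comp_apply, rectPoint_add, rectPoint_inj]
      push_cast
      constructor <;> ring
  · rintro (⟨⟨m, n⟩, rfl⟩ | ⟨⟨m, n⟩, rfl⟩)
    · exact ⟨m - n, 2 * n, by simp⟩
    · refine ⟨m - n, 2 * n + 1, ?_⟩
      rw [Function.comp_apply, rectPoint_add, rectPoint_inj]
      push_cast
      constructor <;> ring

lemma disjoint_rectLattice :
    Disjoint rectLattice ((· + rectPoint (1 / 2) (1 / 2)) '' rectLattice) := by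
  rw [rectLattice, ← Set.range_comp, Set.disjoint_range_iff]
  intro ⟨k, l⟩ ⟨m, n⟩ h
  rw [Function.comp_apply, rectPoint_add, rectPoint_inj] at h
  have : k * 2 = m * 2 + 1 := by
    have := h.1
    field_simp at this
    exact_mod_cast this
  lia

lemma gaussianSum_rectLattice {α : ℝ} (hα : 0 < α) (x y : ℝ) :
    gaussianSum rectLattice α (rectPoint x y) =
      ENNReal.ofReal (HurwitzZeta.evenKernel x (α * hexMinSq) *
        HurwitzZeta.evenKernel y (3 * (α * hexMinSq))) := by
  have t_pos : 0 < α * hexMinSq := mul_pos hα hexMinSq_pos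
  have injective : Function.Injective fun n : ℤ × ℤ ↦ rectPoint n.1 n.2 :=
    fun m n h ↦ Prod.ext (mod_cast (rectPoint_inj.1 h).1) (mod_cast (rectPoint_inj.1 h).2)
  rw [ENNReal.ofReal_mul (evenKernel_nonneg x t_pos), ofReal_evenKernel x t_pos,
    ofReal_evenKernel y (by positivity), ← ENNReal.tsum_mul_right, rectLattice,
    gaussianSum_range injective, ENNReal.tsum_prod']
  congr! 2 with k
  rw [← ENNReal.tsum_mul_left]
  congr! 2 with l
  rw [← ENNReal.ofReal_mul (exp_pos _).le, ← exp_add, rectPoint_sub, norm_rectPoint_sq]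
  ring_nf

lemma gaussianSum_hexLattice {α : ℝ} (hα : 0 < α) (x y : ℝ) :
    gaussianSum hexLattice α (rectPoint x y) = ENNReal.ofReal (hexTheta α x y) := by
  have t_pos : 0 < α * hexMinSq := mul_pos hα hexMinSq_pos
  have nonneg (u v : ℝ) :
      0 ≤ HurwitzZeta.evenKernel u (α * hexMinSq) * HurwitzZeta.evenKernel v (3 * (α * hexMinSq)) :=
    mul_nonneg (evenKernel_nonneg u t_pos) (evenKernel_nonneg v (by positivity))
  rw [hexLattice_eq_union, gaussianSum_union disjoint_rectLattice, gaussianSum_image_add_right,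
    rectPoint_sub, gaussianSum_rectLattice hα, gaussianSum_rectLattice hα, hexTheta,
    ENNReal.ofReal_add (nonneg _ _) (nonneg _ _)]

lemma exists_int_sq_sub_eq (x : ℝ) :
    ∃ (k m : ℤ) (a : ℝ), 0 ≤ a ∧ a ≤ 1 / 2 ∧
      (k - x) ^ 2 = a ^ 2 ∧ (m + 1 / 2 - x) ^ 2 = (1 / 2 - a) ^ 2 := by
  have dist_le := abs_le.1 (abs_sub_round x)
  rcases le_total 0 (x - round x) with h | h
  · exact ⟨round x, round x, x - round x, h, dist_le.2, by ring, by ring⟩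
  · refine ⟨round x, round x - 1, round x - x, by linarith, by linarith, by ring, ?_⟩
    push_cast
    ring

lemma sq_add_three_mul_sq_le {a b : ℝ} (ha₀ : 0 ≤ a) (ha : a ≤ 1 / 2) (hb₀ : 0 ≤ b)
    (hab : a + 3 * b ≤ 1) : a ^ 2 + 3 * b ^ 2 ≤ 1 / 3 := by
  have : (3 * b) ^ 2 ≤ (1 - a) ^ 2 := by
    gcongr
    linarith
  nlinarith

lemma exists_mem_hexLattice_norm_sub_sq_le (z : EuclideanSpace ℝ (Fin 2)) :
    ∃ p ∈ hexLattice, ‖p - z‖ ^ 2 ≤ hexMinSq / 3 := by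
  obtain ⟨x, y, rfl⟩ := exists_rectPoint_eq z
  obtain ⟨k, m, a, ha₀, ha, hk, hm⟩ := exists_int_sq_sub_eq x
  obtain ⟨l, n, b, hb₀, hb, hl, hn⟩ := exists_int_sq_sub_eq y
  have norm_le {u v : ℝ} (h : (u - x) ^ 2 + 3 * (v - y) ^ 2 ≤ 1 / 3) :
      ‖rectPoint u v - rectPoint x y‖ ^ 2 ≤ hexMinSq / 3 := by
    rw [rectPoint_sub, norm_rectPoint_sq]
    linarith [mul_le_mul_of_nonneg_left h hexMinSq_pos.le]
  rw [hexLattice_eq_union]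
  rcases le_total (a + 3 * b) 1 with hab | hab
  · refine ⟨rectPoint k l, .inl ⟨(k, l), rfl⟩, norm_le ?_⟩
    rw [hk, hl]
    exact sq_add_three_mul_sq_le ha₀ ha hb₀ hab
  · refine ⟨rectPoint (m + 1 / 2) (n + 1 / 2),
      .inr ⟨rectPoint m n, ⟨(m, n), rfl⟩, rectPoint_add ..⟩, norm_le ?_⟩
    rw [hm, hn]
    apply sq_add_three_mul_sq_le <;> linarith

lemma ofReal_hexThetaLowerBound_le {α : ℝ} (hα : 0 < α) (z : EuclideanSpace ℝ (Fin 2)) :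
    ENNReal.ofReal (hexThetaLowerBound α) ≤ gaussianSum hexLattice α z := by
  unfold hexThetaLowerBound
  split_ifs with hα_lt
  · have hQ : hexNome α ≤ 1 / 3 := by
      rw [← hexNome_two_mul_sq]
      nlinarith [hexNome_two_mul_le hα hα_lt, hexNome_pos (2 * α)]
    obtain ⟨x, y, rfl⟩ := exists_rectPoint_eq z
    rw [gaussianSum_hexLattice hα]
    refine ENNReal.ofReal_le_ofReal ?_
    rw [div_le_iff₀' hα]
    exact one_sub_le_mul_hexTheta hα hQ x y
  · obtain ⟨p, hp, norm_le⟩ := exists_mem_hexLattice_norm_sub_sq_le z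
    convert ofReal_exp_le_gaussianSum hp hα.le norm_le using 3
    ring

/-- The centre of a hexagonal cell of `honeycomb`: up to the factor `√2` it lies in the coset
`hexLattice + 2 • deepHole`, the one that `honeycomb` omits. -/
noncomputable def honeycombHole : EuclideanSpace ℝ (Fin 2) := √2 • (deepHole + deepHole)

lemma deepHole_eq_rectPoint : deepHole = rectPoint (1 / 2) (1 / 6) := by
  rw [deepHole, rectPoint]
  congr 2
  field_simp
  norm_num

lemma gaussianSum_honeycomb_hole_le {α : ℝ} (hα : 0 < α) :
    gaussianSum honeycomb α honeycombHole ≤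
      ENNReal.ofReal (2 * hexTheta (2 * α) (1 / 2) (1 / 6)) := by
  have nonneg : 0 ≤ hexTheta (2 * α) (1 / 2) (1 / 6) := hexTheta_nonneg (by positivity) _ _
  calc gaussianSum honeycomb α honeycombHole
      = gaussianSum (hexLattice ∪ (· + deepHole) '' hexLattice) (2 * α) (deepHole + deepHole) := by
        rw [honeycomb, honeycombHole, gaussianSum_image_smul (by positivity), sq_sqrt zero_le_two]
    _ ≤ gaussianSum hexLattice (2 * α) (deepHole + deepHole) +
          gaussianSum hexLattice (2 * α) deepHole := by
        grw [gaussianSum_union_le, gaussianSum_image_add_right, add_sub_cancel_right]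
    _ = ENNReal.ofReal (hexTheta (2 * α) (1 / 2) (1 / 6)) +
          ENNReal.ofReal (hexTheta (2 * α) (1 / 2) (1 / 6)) := by
        rw [deepHole_eq_rectPoint, rectPoint_add, gaussianSum_hexLattice (by positivity),
          gaussianSum_hexLattice (by positivity), ← hexTheta_one_third]
        norm_num only
    _ = ENNReal.ofReal (2 * hexTheta (2 * α) (1 / 2) (1 / 6)) := by
        rw [← ENNReal.ofReal_add nonneg nonneg, ← two_mul]

lemma gaussianSum_honeycomb_hole_lt {α : ℝ} (hα : 0 < α) :
    gaussianSum honeycomb α honeycombHole < ENNReal.ofReal (hexThetaLowerBound α) := by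
  have theta_lt := two_mul_hexTheta_two_mul_lt hα
  have nonneg := hexTheta_nonneg (show 0 < 2 * α by positivity) (1 / 2) (1 / 6)
  exact (gaussianSum_honeycomb_hole_le hα).trans_lt
    ((ENNReal.ofReal_lt_ofReal_iff_of_nonneg (by positivity)).2 theta_lt)

instance : Countable hexLattice := by
  have : hexLattice.Countable := by
    rw [hexLattice_eq_union]
    exact (Set.countable_range _).union ((Set.countable_range _).image _)
  exact this.to_subtype

instance : Countable honeycomb :=
  (((Set.to_countable hexLattice).union ((Set.to_countable hexLattice).image _)).image _).to_subtype

lemma tsum_eq_lintegral_gaussianSum {E : Type*} [SeminormedAddCommGroup E]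
    {μ : Measure (Set.Ioi (0 : ℝ))} {f : ℝ → ℝ≥0∞}
    (hf : ∀ r : ℝ, 0 ≤ r →
      f r = ∫⁻ a : Set.Ioi (0 : ℝ), ENNReal.ofReal (exp (-(π * (a : ℝ)) * r)) ∂μ)
    (S : Set E) [Countable S] (z : E) :
    ∑' p : S, f (‖(p : E) - z‖ ^ 2) = ∫⁻ a : Set.Ioi (0 : ℝ), gaussianSum S a z ∂μ := by
  simp_rw [gaussianSum, hf _ (sq_nonneg _)]
  exact (lintegral_tsum fun p ↦ by fun_prop).symm

theorem hex_polarization_gt_honeycomb_polarization_cm_general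
    (μ : Measure (Set.Ioi (0 : ℝ))) (hμ : μ ≠ 0)
    (f : ℝ → ℝ≥0∞)
    (hf : ∀ r : ℝ, 0 ≤ r →
      f r = ∫⁻ a : Set.Ioi (0 : ℝ), ENNReal.ofReal (Real.exp (-(Real.pi * (a : ℝ)) * r)) ∂μ)
    (hfin : ∃ z : EuclideanSpace ℝ (Fin 2),
      (∑' g : honeycomb, f (‖(g : EuclideanSpace ℝ (Fin 2)) - z‖ ^ 2)) < ⊤) :
    (⨅ z : EuclideanSpace ℝ (Fin 2),
        ∑' l : hexLattice, f (‖(l : EuclideanSpace ℝ (Fin 2)) - z‖ ^ 2)) >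
    (⨅ z : EuclideanSpace ℝ (Fin 2),
        ∑' g : honeycomb, f (‖(g : EuclideanSpace ℝ (Fin 2)) - z‖ ^ 2)) := by
  obtain ⟨z₀, hz₀⟩ := hfin
  simp_rw [tsum_eq_lintegral_gaussianSum hf] at hz₀ ⊢
  have hole_lt (a : Set.Ioi (0 : ℝ)) := gaussianSum_honeycomb_hole_lt a.2
  suffices ⨅ z, ∫⁻ a : Set.Ioi (0 : ℝ), gaussianSum honeycomb a z ∂μ <
      ∫⁻ a : Set.Ioi (0 : ℝ), ENNReal.ofReal (hexThetaLowerBound a) ∂μ from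
    this.trans_le (le_iInf fun z ↦ lintegral_mono fun a ↦ ofReal_hexThetaLowerBound_le a.2 z)
  by_cases hole_top : ∫⁻ a : Set.Ioi (0 : ℝ), gaussianSum honeycomb a honeycombHole ∂μ = ⊤
  · refine (iInf_le _ z₀).trans_lt (hz₀.trans_eq (top_le_iff.1 ?_).symm)
    exact hole_top ▸ lintegral_mono fun a ↦ (hole_lt a).le
  · have measurable : Measurable fun a : Set.Ioi (0 : ℝ) ↦ hexThetaLowerBound a :=
      measurable_hexThetaLowerBound.comp measurable_subtype_coe
    exact (iInf_le _ honeycombHole).trans_lt (lintegral_strict_mono hμ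
      measurable.ennreal_ofReal.aemeasurable hole_top (.of_forall hole_lt))

/-- For a completely monotone potential of squared distance, represented via
Bernstein–Widder as `f(r) = ∫_{(0,∞)} exp(−παr) dμ(α)` for a nonzero Borel measure `μ`
on `(0,∞)`, and assuming the honeycomb sums are finite, the polarization of the
hexagonal lattice strictly exceeds that of the honeycomb structure. -/
theorem hex_polarization_gt_honeycomb_polarization_cm
    (μ : Measure (Set.Ioi (0 : ℝ))) (hμ : μ ≠ 0)
    (f : ℝ → ℝ≥0∞)
    (hf : ∀ r : ℝ, 0 ≤ r →
      f r = ∫⁻ a : Set.Ioi (0 : ℝ), ENNReal.ofReal (Real.exp (-(Real.pi * (a : ℝ)) * r)) ∂μ)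
    (hfin : ∀ z : EuclideanSpace ℝ (Fin 2),
      (∑' g : honeycomb, f (‖(g : EuclideanSpace ℝ (Fin 2)) - z‖ ^ 2)) < ⊤) :
    (⨅ z : EuclideanSpace ℝ (Fin 2),
        ∑' l : hexLattice, f (‖(l : EuclideanSpace ℝ (Fin 2)) - z‖ ^ 2)) >
    (⨅ z : EuclideanSpace ℝ (Fin 2),
        ∑' g : honeycomb, f (‖(g : EuclideanSpace ℝ (Fin 2)) - z‖ ^ 2)) := by
  exact hex_polarization_gt_honeycomb_polarization_cm_general μ hμ f hf ⟨0, hfin 0⟩
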